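/- Let ℓ, u ∈ ℤⁿ with ℓ ≤ u componentwise, let 𝒳 = {x ∈ ℤⁿ : ℓ ≤ x ≤ u}, and let h¹, …, hⁿ : 𝒳 → ℝ. Fix j ∈ {1,…,n} and suppose that for every i ∈ {1,…,n}, the functions x ↦ max(0, hⁱ(x) − hʲ(x)) and x ↦ max(hⁱ(x), hʲ(x)) are L♮-convex on 𝒳. Define D^j = {(w, y, x) ∈ ℝ × ℝⁿ × ℝⁿ : x ∈ 𝒳, and for every i, w + yᵢ ≥ max(hʲ(x), hⁱ(x)) and yᵢ ≥ max(0, hⁱ(x) − hʲ(x))}. Then the convex hull of D^j equals {(w, y, x) ∈ ℝ × ℝⁿ × ℝⁿ : ℓ ≤ x ≤ u componentwise, and for every i, (x, w + yᵢ) lies in the convex hull of the epigraph {(x′, t) : x′ ∈ 𝒳, t ≥ max(hⁱ(x′), hʲ(x′))} and (x, yᵢ) lies in the convex hull of the epigraph {(x′, t) : x′ ∈ 𝒳, t ≥ max(0, hⁱ(x′) − hʲ(x′))}}. -/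

import Mathlib

/-- Membership in the discrete hyperrectangle `𝒳 = {x ∈ ℤⁿ : l ≤ x ≤ u}`. -/
def inBox {n : ℕ} (l u x : Fin n → ℤ) : Prop := ∀ i, l i ≤ x i ∧ x i ≤ u i

/-- The epigraph `{(x, w) ∈ ℝⁿ × ℝ : x ∈ 𝒳, w ≥ f(x)}` viewed inside `ℝⁿ × ℝ`. -/
def epiSet {n : ℕ} (l u : Fin n → ℤ) (f : (Fin n → ℤ) → ℝ) :
    Set ((Fin n → ℝ) × ℝ) :=
  {q | ∃ x : Fin n → ℤ, inBox l u x ∧ q.1 = (fun i => (x i : ℝ)) ∧ f x ≤ q.2}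

/-- L♮-convexity of `f` on the box `{x ∈ ℤⁿ : l ≤ x ≤ u}`. -/
def IsLNatOn {n : ℕ} (l u : Fin n → ℤ) (f : (Fin n → ℤ) → ℝ) : Prop :=
  ∀ x y : Fin n → ℤ, inBox l u x → inBox l u y → ∀ α : ℤ, 0 ≤ α →
    inBox l u (((fun i => x i - α) : Fin n → ℤ) ⊔ y) →
    inBox l u (x ⊓ ((fun i => y i + α) : Fin n → ℤ)) →
    f x + f y ≥ f (((fun i => x i - α) : Fin n → ℤ) ⊔ y)
      + f (x ⊓ ((fun i => y i + α) : Fin n → ℤ))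

/-!
Fix `x` in the hull of the box and consider the probability weights on the lattice points of the
box with barycenter `x`. For an L♮-convex `f`, replacing a pair of points by its exchange
`(y - α • 1) ⊔ z`, `y ⊓ (z + α • 1)` preserves the barycenter and does not increase the mean of
`f`. Among the weights minimizing that mean, those minimizing a suitable quadratic potential thus
have a support on which no exchange acts. Such a support lies in the minimal simplex of
Freudenthal's triangulation containing `x`, whose vertices are affinely independent, so these
weights depend only on `x` and not on `f`. Hence a single family of weights attains all the convex
envelopes at `x` simultaneously, and since `max hⁱ hʲ = hʲ + max 0 (hⁱ - hʲ)`, it writes a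
point of the right-hand side as a convex combination of points of `D^j`.
-/

open Matrix

section BarycentricWeights

variable {κ ι : Type*} [Fintype κ] {p : κ → ι → ℝ} {x : ι → ℝ} {w : κ → ℝ}

/-- The probability weights `w` on `κ` for which the points `p k` have barycenter `x`. -/
def barycentricWeights (p : κ → ι → ℝ) (x : ι → ℝ) : Set (κ → ℝ) :=
  {w | w ∈ stdSimplex ℝ κ ∧ ∀ i, (w ⬝ᵥ fun k => p k i) = x i}

lemma continuous_dotProduct_right (f : κ → ℝ) : Continuous fun w : κ → ℝ => w ⬝ᵥ f :=
  continuous_id.dotProduct continuous_const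

lemma isCompact_barycentricWeights (p : κ → ι → ℝ) (x : ι → ℝ) :
    IsCompact (barycentricWeights p x) := by
  have hclosed : IsClosed {w : κ → ℝ | ∀ i, (w ⬝ᵥ fun k => p k i) = x i} := by
    rw [Set.ofPred_forall]
    exact isClosed_iInter fun i => isClosed_eq (continuous_dotProduct_right _) continuous_const
  exact (isCompact_stdSimplex ℝ κ).inter_right hclosed

lemma dotProduct_lt_of_mem_stdSimplex (hw : w ∈ stdSimplex ℝ κ) {f : κ → ℝ} {c : ℝ} {a : κ}
    (ha : 0 < w a) (hlt : f a < c) (hle : ∀ k, 0 < w k → f k ≤ c) : w ⬝ᵥ f < c := by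
  have hterm (k : κ) : w k * f k ≤ w k * c := by
    rcases (hw.1 k).eq_or_lt with hk | hk
    · simp [← hk]
    · exact mul_le_mul_of_nonneg_left (hle k hk) hk.le
  calc w ⬝ᵥ f < ∑ k, w k * c :=
        Finset.sum_lt_sum (fun k _ => hterm k) ⟨a, Finset.mem_univ a, mul_lt_mul_of_pos_left hlt ha⟩
    _ = c := by rw [← Finset.sum_mul, hw.2, one_mul]

lemma exists_exchange (hw : w ∈ barycentricWeights p x) {a b c d : κ} (ha : 0 < w a)
    (hb : 0 < w b) (hp : p c + p d = p a + p b) :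
    ∃ ε > 0, ∃ w' ∈ barycentricWeights p x, ∀ f : κ → ℝ,
      w' ⬝ᵥ f = w ⬝ᵥ f + ε * (f c + f d - (f a + f b)) := by
  classical
  -- The factor `2` covers the case `a = b`, where `ε` is subtracted twice from the same weight.
  obtain ⟨ε, hε, hεa, hεb⟩ : ∃ ε > 0, 2 * ε ≤ w a ∧ 2 * ε ≤ w b :=
    ⟨min (w a) (w b) / 2, half_pos (lt_min ha hb), by linarith [min_le_left (w a) (w b)],
      by linarith [min_le_right (w a) (w b)]⟩
  let w' := w + (Pi.single c ε + Pi.single d ε - (Pi.single a ε + Pi.single b ε))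
  have hdot (f : κ → ℝ) : w' ⬝ᵥ f = w ⬝ᵥ f + ε * (f c + f d - (f a + f b)) := by
    simp only [w', add_dotProduct, sub_dotProduct, single_dotProduct]
    ring
  refine ⟨ε, hε, w', ⟨⟨fun k => ?_, ?_⟩, fun i => ?_⟩, hdot⟩
  · have hk := hw.1.1 k
    simp only [w', Pi.add_apply, Pi.sub_apply, Pi.single_apply]
    grind
  · have hsum := hdot 1
    simp only [dotProduct_one, Pi.one_apply, hw.1.2] at hsum
    simpa using hsum
  · have hpi : p c i + p d i = p a i + p b i := congrFun hp i
    rw [hdot, hw.2, hpi, sub_self, mul_zero, add_zero]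

lemma exists_isMinOn_lex {X : Type*} [TopologicalSpace X] {s : Set X} (hs : IsCompact s)
    (hne : s.Nonempty) {f g : X → ℝ} (hf : Continuous f) (hg : Continuous g) :
    ∃ a ∈ s, IsMinOn f s a ∧ ∀ b ∈ s, f b ≤ f a → g a ≤ g b := by
  obtain ⟨a₀, ha₀, hmin₀⟩ := hs.exists_isMinOn hne hf.continuousOn
  have hcompact : IsCompact (s ∩ {b | f b ≤ f a₀}) :=
    hs.inter_right (isClosed_le hf continuous_const)
  obtain ⟨a, ⟨ha, hfa⟩, hmin⟩ := hcompact.exists_isMinOn ⟨a₀, ha₀, le_refl (f a₀)⟩ hg.continuousOn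
  exact ⟨a, ha, isMinOn_iff.mpr fun b hb => hfa.trans (hmin₀ hb),
    fun b hb hba => hmin ⟨hb, hba.trans hfa⟩⟩

lemma exists_isMinOn_forall_exchange_le (hne : (barycentricWeights p x).Nonempty) (f g : κ → ℝ) :
    ∃ w ∈ barycentricWeights p x, IsMinOn (· ⬝ᵥ f) (barycentricWeights p x) w ∧
      ∀ a b c d, 0 < w a → 0 < w b → p c + p d = p a + p b →
        f c + f d ≤ f a + f b → g a + g b ≤ g c + g d := by
  obtain ⟨w, hw, hf, hg⟩ := exists_isMinOn_lex (isCompact_barycentricWeights p x) hne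
    (continuous_dotProduct_right f) (continuous_dotProduct_right g)
  refine ⟨w, hw, hf, fun a b c d ha hb hp hfle => ?_⟩
  obtain ⟨ε, hε, w', hw', hdot⟩ := exists_exchange hw ha hb hp
  have hf' : w' ⬝ᵥ f ≤ w ⬝ᵥ f := by
    rw [hdot]
    linarith [mul_nonneg hε.le (sub_nonneg.mpr hfle)]
  have hg' : w ⬝ᵥ g ≤ w' ⬝ᵥ g := hg w' hw' hf'
  rw [hdot] at hg'
  exact sub_nonneg.mp (nonneg_of_mul_nonneg_right (by linarith) hε)

lemma exists_barycentricWeights_of_mem_convexHull (f : κ → ℝ) {q : (ι → ℝ) × ℝ}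
    (hq : q ∈ convexHull ℝ {q : (ι → ℝ) × ℝ | ∃ k, q.1 = p k ∧ f k ≤ q.2}) :
    ∃ w ∈ barycentricWeights p q.1, w ⬝ᵥ f ≤ q.2 := by
  classical
  refine convexHull_min
    (t := {q : (ι → ℝ) × ℝ | ∃ w ∈ barycentricWeights p q.1, w ⬝ᵥ f ≤ q.2}) ?_ ?_ hq
  · rintro ⟨_, t⟩ ⟨k, rfl, hk⟩
    exact ⟨Pi.single k 1, ⟨single_mem_stdSimplex ℝ k, fun i => by simp⟩, by simpa using hk⟩
  · rintro q ⟨w, hw, hwf⟩ r ⟨v, hv, hvf⟩ a b ha hb hab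
    refine ⟨a • w + b • v, ⟨convex_stdSimplex ℝ κ hw.1 hv.1 ha hb hab, fun i => ?_⟩, ?_⟩
    · simp [add_dotProduct, hw.2, hv.2]
    · rw [add_dotProduct, smul_dotProduct, smul_dotProduct]
      exact add_le_add (smul_le_smul_of_nonneg_left hwf ha) (smul_le_smul_of_nonneg_left hvf hb)

end BarycentricWeights

section Uncrossing

variable {ι : Type*}

/-- The point `(x - α • 1) ⊔ y` of the exchange in the definition of L♮-convexity. -/
def uncrossSup (x y : ι → ℤ) (α : ℤ) : ι → ℤ := (fun i => x i - α) ⊔ y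

/-- The point `x ⊓ (y + α • 1)` of the exchange in the definition of L♮-convexity. -/
def uncrossInf (x y : ι → ℤ) (α : ℤ) : ι → ℤ := x ⊓ fun i => y i + α

lemma uncrossSup_apply (x y : ι → ℤ) (α : ℤ) (i : ι) :
    uncrossSup x y α i = y i + (x i - y i - α)⁺ := by
  simp only [uncrossSup, Pi.sup_apply, posPart_def]
  omega

lemma uncrossInf_apply (x y : ι → ℤ) (α : ℤ) (i : ι) :
    uncrossInf x y α i = x i - (x i - y i - α)⁺ := by
  simp only [uncrossInf, Pi.inf_apply, posPart_def]
  omega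

lemma uncrossSup_mem_Icc {l u x y : ι → ℤ} (hx : x ∈ Set.Icc l u) (hy : y ∈ Set.Icc l u) {α : ℤ}
    (hα : 0 ≤ α) : uncrossSup x y α ∈ Set.Icc l u :=
  ⟨hy.1.trans le_sup_right,
    sup_le (fun i => (sub_le_self (x i) hα).trans (hx.2 i)) hy.2⟩

lemma uncrossInf_mem_Icc {l u x y : ι → ℤ} (hx : x ∈ Set.Icc l u) (hy : y ∈ Set.Icc l u) {α : ℤ}
    (hα : 0 ≤ α) : uncrossInf x y α ∈ Set.Icc l u :=
  ⟨le_inf hx.1 fun i => (hy.1 i).trans (le_add_of_nonneg_right hα), inf_le_left.trans hx.2⟩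

variable [Fintype ι]

/-- The quadratic form `∑ i, y i ^ 2 + ∑ i, ∑ k, (y i - y k) ^ 2`, expanded: a potential which
decreases strictly under every exchange that changes the pair of points. -/
def uncrossPotential (y : ι → ℤ) : ℤ :=
  (2 * Fintype.card ι + 1) * ∑ i, y i ^ 2 - 2 * (∑ i, y i) ^ 2

lemma uncrossPotential_uncross (x y : ι → ℤ) (α : ℤ) :
    uncrossPotential (uncrossSup x y α) + uncrossPotential (uncrossInf x y α) =
      uncrossPotential x + uncrossPotential y -
        2 * (∑ i, (x i - y i - α)⁺) * (α + 2 * ∑ i, (x i - y i - α)⁻) := by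
  have hsq (i : ι) : (y i + (x i - y i - α)⁺) ^ 2 + (x i - (x i - y i - α)⁺) ^ 2 =
      x i ^ 2 + y i ^ 2 - 2 * α * (x i - y i - α)⁺ := by
    rcases le_total 0 (x i - y i - α) with h | h
    · rw [posPart_of_nonneg h]; ring
    · rw [posPart_of_nonpos h]; ring
  have hsum_sq := Finset.sum_congr (rfl : (Finset.univ : Finset ι) = _) fun i _ => hsq i
  have hdiff : ∑ i, (x i - y i - α)⁺ - ∑ i, (x i - y i - α)⁻ =
      ∑ i, x i - ∑ i, y i - Fintype.card ι * α := by
    simp only [← Finset.sum_sub_distrib, posPart_sub_negPart]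
    simp [Finset.sum_sub_distrib]
  simp only [Finset.sum_add_distrib, Finset.sum_sub_distrib, ← Finset.mul_sum] at hsum_sq
  simp only [uncrossPotential, uncrossSup_apply, uncrossInf_apply, Finset.sum_add_distrib,
    Finset.sum_sub_distrib]
  linear_combination (2 * (Fintype.card ι : ℤ) + 1) * hsum_sq -
    4 * (∑ i, (x i - y i - α)⁺) * hdiff

lemma uncrossPotential_uncross_lt {x y : ι → ℤ} {α : ℤ} (hα : 0 ≤ α)
    (hxy : ¬ x ≤ fun i => y i + α) (hyx : 0 < α ∨ ¬ y ≤ x) :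
    uncrossPotential (uncrossSup x y α) + uncrossPotential (uncrossInf x y α) <
      uncrossPotential x + uncrossPotential y := by
  have hpos : 0 < ∑ i, (x i - y i - α)⁺ := by
    obtain ⟨i, hi⟩ := by simpa only [Pi.le_def, not_forall, not_le] using hxy
    exact Finset.sum_pos' (fun i _ => posPart_nonneg _)
      ⟨i, Finset.mem_univ i, posPart_pos (by omega)⟩
  have hneg : 0 ≤ ∑ i, (x i - y i - α)⁻ := Finset.sum_nonneg fun i _ => negPart_nonneg _
  have hfactor : 0 < α + 2 * ∑ i, (x i - y i - α)⁻ := by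
    rcases hyx with hα' | hyx
    · linarith
    · obtain ⟨i, hi⟩ := by simpa only [Pi.le_def, not_forall, not_le] using hyx
      have : 0 < ∑ i, (x i - y i - α)⁻ := Finset.sum_pos' (fun i _ => negPart_nonneg _)
        ⟨i, Finset.mem_univ i, negPart_pos (by omega)⟩
      linarith
  rw [uncrossPotential_uncross]
  linarith [mul_pos hpos hfactor]

end Uncrossing

section Uncrossed

variable {κ ι : Type*} [Fintype κ]

/-- A set of lattice points on which no exchange acts: a chain of pairwise sup-distance at
most one, so that its points are vertices of one simplex of Freudenthal's triangulation. -/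
def IsUncrossed (S : Set (ι → ℤ)) : Prop :=
  IsChain (· ≤ ·) S ∧ ∀ y ∈ S, ∀ z ∈ S, y ≤ z + 1

lemma IsUncrossed.mono {S T : Set (ι → ℤ)} (hT : IsUncrossed T) (hST : S ⊆ T) : IsUncrossed S :=
  ⟨hT.1.mono hST, fun y hy z hz => hT.2 y (hST hy) z (hST hz)⟩

/-- The vertices of the minimal simplex of Freudenthal's triangulation that contains `x`. -/
def freudenthalVertices (x : ι → ℝ) : Set (ι → ℤ) :=
  {y | ∀ i, |x i - y i| < 1 ∧ ∀ k, (x i - y i) - (x k - y k) < 1}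

lemma isUncrossed_freudenthalVertices (x : ι → ℝ) : IsUncrossed (freudenthalVertices x) := by
  refine ⟨fun y hy z hz _ => ?_, fun y hy z hz i => ?_⟩
  · by_contra! hcross
    simp only [Pi.le_def, not_forall, not_le] at hcross
    obtain ⟨⟨i, hi⟩, k, hk⟩ := hcross
    have hi' : (z i : ℝ) + 1 ≤ y i := by exact_mod_cast hi
    have hk' : (y k : ℝ) + 1 ≤ z k := by exact_mod_cast hk
    linarith [(hz i).2 k, (hy k).2 i]
  · have hlt : (y i : ℝ) < z i + 2 := by
      linarith [(abs_lt.mp (hy i).1).1, (abs_lt.mp (hz i).1).2]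
    have hlt' : y i < z i + 2 := by exact_mod_cast hlt
    simp only [Pi.add_apply, Pi.one_apply]
    omega

lemma exists_isGreatest_of_isChain {α : Type*} [Preorder α] {S : Set α}
    (hS : IsChain (· ≤ ·) S) (hfin : S.Finite) (hne : S.Nonempty) : ∃ a, IsGreatest S a := by
  obtain ⟨a, ha⟩ := hfin.exists_maximal hne
  exact ⟨a, ha.prop, fun b hb => (hS.total hb ha.prop).elim id (ha.le_of_ge hb)⟩

lemma IsUncrossed.exists_forall_apply_eq_sub_one {S : Set (ι → ℤ)} (hS : IsUncrossed S)
    (hfin : S.Finite) {y : ι → ℤ} (hy : IsGreatest S y) (hne : (S \ {y}).Nonempty) :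
    ∃ i, ∀ z ∈ S \ {y}, z i = y i - 1 := by
  obtain ⟨y', hy', hmax⟩ := exists_isGreatest_of_isChain (hS.1.mono Set.sdiff_subset)
    hfin.sdiff hne
  obtain ⟨i, hi⟩ : ∃ i, y' i < y i := by
    by_contra! hle
    exact hy'.2 (le_antisymm (hy.2 hy'.1) hle)
  refine ⟨i, fun z hz => ?_⟩
  have hzy' : z i ≤ y' i := hmax hz i
  have hyz : y i ≤ z i + 1 := hS.2 y hy.1 z hz.1 i
  omega

/-- Affine independence of uncrossed sets, in terms of signed weights. -/
lemma eq_zero_of_isUncrossed_image_support {P : κ → ι → ℤ} (hP : Function.Injective P)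
    {c : κ → ℝ} (hc : IsUncrossed (P '' Function.support c)) (hsum : ∑ k, c k = 0)
    (hmoment : ∀ i, (c ⬝ᵥ fun k => (P k i : ℝ)) = 0) : c = 0 := by
  by_contra hc₀
  have hfin : (P '' Function.support c).Finite := Set.toFinite _
  obtain ⟨_, ⟨a, ha, rfl⟩, hmax⟩ := exists_isGreatest_of_isChain hc.1 hfin
    ((Function.support_nonempty_iff.mpr hc₀).image P)
  -- An affine function equal to `1` at `P a` and `0` at the rest of the support isolates `c a`.
  suffices h : ∃ f : κ → ℝ, f a = 1 ∧ (∀ k, c k ≠ 0 → k ≠ a → f k = 0) ∧ c ⬝ᵥ f = 0 by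
    obtain ⟨f, hfa, hf, hcf⟩ := h
    refine ha ?_
    rw [← hcf, dotProduct, Finset.sum_eq_single a (fun k _ hk => ?_) (by simp), hfa, mul_one]
    by_cases hck : c k = 0
    · rw [hck, zero_mul]
    · rw [hf k hck hk, mul_zero]
  rcases (P '' Function.support c \ {P a}).eq_empty_or_nonempty with hempty | hne
  · refine ⟨1, rfl, fun k hck hka => ?_, by rw [dotProduct_one, hsum]⟩
    exact (hempty.subset ⟨Set.mem_image_of_mem P hck, hP.ne hka⟩).elim
  · obtain ⟨i, hi⟩ := hc.exists_forall_apply_eq_sub_one hfin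
      ⟨Set.mem_image_of_mem P ha, hmax⟩ hne
    refine ⟨fun k => P k i - (P a i - 1), by simp, fun k hck hka => ?_, ?_⟩
    · simp [hi (P k) ⟨Set.mem_image_of_mem P hck, hP.ne hka⟩]
    · have hsplit : (c ⬝ᵥ fun k => (P k i : ℝ) - (P a i - 1)) =
          (c ⬝ᵥ fun k => (P k i : ℝ)) - (∑ k, c k) * (P a i - 1) := by
        simp only [dotProduct, mul_sub, Finset.sum_sub_distrib, ← Finset.sum_mul]
      rw [hsplit, hmoment, hsum, zero_mul, sub_zero]

variable {P : κ → ι → ℤ} {x : ι → ℝ} {v w : κ → ℝ}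

lemma IsUncrossed.image_subset_freudenthalVertices
    (hw : w ∈ barycentricWeights (fun k i => (P k i : ℝ)) x)
    (hS : IsUncrossed (P '' {k | 0 < w k})) :
    P '' {k | 0 < w k} ⊆ freudenthalVertices x := by
  rintro _ ⟨a, ha, rfl⟩ i
  have hle (k : κ) (hk : 0 < w k) (i : ι) : P k i ≤ P a i + 1 ∧ P a i ≤ P k i + 1 :=
    have hka := Set.mem_image_of_mem P (show k ∈ {k | 0 < w k} from hk)
    ⟨hS.2 _ hka _ (Set.mem_image_of_mem P ha) i, hS.2 _ (Set.mem_image_of_mem P ha) _ hka i⟩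
  have hupper : x i < P a i + 1 := by
    rw [← hw.2 i]
    refine dotProduct_lt_of_mem_stdSimplex hw.1 ha (lt_add_one _) fun k hk => ?_
    have : (P k i : ℝ) ≤ P a i + 1 := by exact_mod_cast (hle k hk i).1
    exact this
  have hlower : -x i < 1 - P a i := by
    rw [← hw.2 i, ← dotProduct_neg]
    refine dotProduct_lt_of_mem_stdSimplex hw.1 ha (by simp) fun k hk => ?_
    have : (P a i : ℝ) ≤ P k i + 1 := by exact_mod_cast (hle k hk i).2
    simp only [Pi.neg_apply]
    linarith
  refine ⟨abs_lt.mpr ⟨by linarith, by linarith⟩, fun m => ?_⟩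
  have hdiff : x i - x m < P a i - P a m + 1 := by
    rw [← hw.2 i, ← hw.2 m, ← dotProduct_sub]
    refine dotProduct_lt_of_mem_stdSimplex hw.1 ha (by simp) fun k hk => ?_
    have : P k i - P k m ≤ P a i - P a m + 1 := by
      rcases hS.1.total (Set.mem_image_of_mem P (show k ∈ {k | 0 < w k} from hk))
        (Set.mem_image_of_mem P ha) with hka | hak
      · linarith [hka i, (hle k hk m).2]
      · linarith [hak m, (hle k hk i).1]
    simp only [Pi.sub_apply]
    exact_mod_cast this
  linarith

lemma eq_of_isUncrossed_of_mem_barycentricWeights (hP : Function.Injective P)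
    (hw : w ∈ barycentricWeights (fun k i => (P k i : ℝ)) x)
    (hv : v ∈ barycentricWeights (fun k i => (P k i : ℝ)) x)
    (hwu : IsUncrossed (P '' {k | 0 < w k})) (hvu : IsUncrossed (P '' {k | 0 < v k})) :
    w = v := by
  have hsupport : P '' Function.support (w - v) ⊆ freudenthalVertices x := by
    rintro _ ⟨k, hk, rfl⟩
    by_cases hwk : 0 < w k
    · exact hwu.image_subset_freudenthalVertices hw ⟨k, hwk, rfl⟩
    · refine hvu.image_subset_freudenthalVertices hv ⟨k, (hv.1.1 k).lt_of_ne' fun hvk => hk ?_, rfl⟩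
      rw [Pi.sub_apply, hvk, sub_zero, le_antisymm (not_lt.mp hwk) (hw.1.1 k)]
  refine sub_eq_zero.mp (eq_zero_of_isUncrossed_image_support hP
    ((isUncrossed_freudenthalVertices x).mono hsupport) ?_ fun i => ?_)
  · simp [Finset.sum_sub_distrib, hw.1.2, hv.1.2]
  · rw [sub_dotProduct, hw.2, hv.2, sub_self]

end Uncrossed

section Box

variable {n : ℕ} {l u : Fin n → ℤ} {x : Fin n → ℝ}

lemma inBox_iff_mem_Icc {z : Fin n → ℤ} : inBox l u z ↔ z ∈ Set.Icc l u :=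
  forall_and

/-- The probability weights with barycenter `x` on the lattice points of the box. -/
def boxWeights (l u : Fin n → ℤ) (x : Fin n → ℝ) : Set (Set.Icc l u → ℝ) :=
  barycentricWeights (fun (z : Set.Icc l u) i => (z.1 i : ℝ)) x

lemma exists_boxWeights_of_mem_convexHull_epiSet {f : (Fin n → ℤ) → ℝ} {q : (Fin n → ℝ) × ℝ}
    (hq : q ∈ convexHull ℝ (epiSet l u f)) :
    ∃ w ∈ boxWeights l u q.1, (w ⬝ᵥ fun z => f z) ≤ q.2 := by
  refine exists_barycentricWeights_of_mem_convexHull _ (convexHull_mono ?_ hq)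
  rintro _ ⟨z, hz, hzq⟩
  exact ⟨⟨z, inBox_iff_mem_Icc.mp hz⟩, hzq⟩

lemma IsLNatOn.exists_isUncrossed_isMinOn {f : (Fin n → ℤ) → ℝ} (hf : IsLNatOn l u f)
    (hne : (boxWeights l u x).Nonempty) :
    ∃ w ∈ boxWeights l u x, IsUncrossed (Subtype.val '' {z | 0 < w z}) ∧
      IsMinOn (· ⬝ᵥ fun z : Set.Icc l u => f z) (boxWeights l u x) w := by
  obtain ⟨w, hw, hmin, hexchange⟩ := exists_isMinOn_forall_exchange_le hne
    (fun z : Set.Icc l u => f z) (fun z => (uncrossPotential z.1 : ℝ))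
  have hpotential {y z : Set.Icc l u} (hy : 0 < w y) (hz : 0 < w z) {α : ℤ} (hα : 0 ≤ α) :
      uncrossPotential y.1 + uncrossPotential z.1 ≤
        uncrossPotential (uncrossSup y.1 z.1 α) + uncrossPotential (uncrossInf y.1 z.1 α) := by
    have hsup := uncrossSup_mem_Icc y.2 z.2 hα
    have hinf := uncrossInf_mem_Icc y.2 z.2 hα
    have hsum : (fun i => (uncrossSup y.1 z.1 α i : ℝ)) + (fun i => (uncrossInf y.1 z.1 α i : ℝ)) =
        (fun i => (y.1 i : ℝ)) + fun i => (z.1 i : ℝ) := by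
      funext i
      simp only [Pi.add_apply, uncrossSup_apply, uncrossInf_apply]
      push_cast
      ring
    exact_mod_cast hexchange y z ⟨_, hsup⟩ ⟨_, hinf⟩ hy hz hsum
      (hf y z (inBox_iff_mem_Icc.mpr y.2) (inBox_iff_mem_Icc.mpr z.2) α hα
        (inBox_iff_mem_Icc.mpr hsup) (inBox_iff_mem_Icc.mpr hinf))
  refine ⟨w, hw, ⟨?_, ?_⟩, hmin⟩
  · rintro _ ⟨y, hy, rfl⟩ _ ⟨z, hz, rfl⟩ -
    by_contra! hincomparable
    exact (hpotential hy hz le_rfl).not_gt (uncrossPotential_uncross_lt le_rfl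
      (by simpa using hincomparable.1) (.inr hincomparable.2))
  · rintro _ ⟨y, hy, rfl⟩ _ ⟨z, hz, rfl⟩
    by_contra hfar
    exact (hpotential hy hz zero_le_one).not_gt
      (uncrossPotential_uncross_lt zero_le_one hfar (.inl one_pos))

lemma exists_forall_isLNatOn_isMinOn (hne : (boxWeights l u x).Nonempty) :
    ∃ w ∈ boxWeights l u x, ∀ f, IsLNatOn l u f →
      IsMinOn (· ⬝ᵥ fun z : Set.Icc l u => f z) (boxWeights l u x) w := by
  have hzero : IsLNatOn l u 0 := fun _ _ _ _ _ _ _ _ => le_rfl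
  obtain ⟨w, hw, hwu, -⟩ := hzero.exists_isUncrossed_isMinOn hne
  refine ⟨w, hw, fun f hf => ?_⟩
  obtain ⟨v, hv, hvu, hmin⟩ := hf.exists_isUncrossed_isMinOn hne
  rwa [eq_of_isUncrossed_of_mem_barycentricWeights Subtype.val_injective hw hv hwu hvu]

end Box

section ConvexHull

lemma mem_convexHull_of_mapsTo_of_isLinearMap {E F : Type*} [AddCommGroup E] [Module ℝ E]
    [AddCommGroup F] [Module ℝ F] {L : E → F} (hL : IsLinearMap ℝ L) {s : Set E} {t : Set F}
    (hst : Set.MapsTo L s t) {q : E} (hq : q ∈ convexHull ℝ s) : L q ∈ convexHull ℝ t := by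
  have hLq := Set.mem_image_of_mem L hq
  rw [hL.image_convexHull] at hLq
  exact convexHull_mono hst.image_subset hLq

variable {n : ℕ} {κ : Type*} {l u : Fin n → ℤ} {h : κ → (Fin n → ℤ) → ℝ} {j : κ}

/-- The set `D^j`, with the functions `hⁱ` indexed by an arbitrary type. -/
def jointEpiSet (l u : Fin n → ℤ) (h : κ → (Fin n → ℤ) → ℝ) (j : κ) :
    Set (ℝ × (κ → ℝ) × (Fin n → ℝ)) :=
  {q | ∃ z : Fin n → ℤ, inBox l u z ∧ q.2.2 = (fun i => (z i : ℝ)) ∧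
    ∀ i, max (h j z) (h i z) ≤ q.1 + q.2.1 i ∧ max 0 (h i z - h j z) ≤ q.2.1 i}

lemma mem_Icc_of_mem_convexHull_jointEpiSet {q : ℝ × (κ → ℝ) × (Fin n → ℝ)}
    (hq : q ∈ convexHull ℝ (jointEpiSet l u h j)) (i : Fin n) :
    q.2.2 i ∈ Set.Icc (l i : ℝ) (u i) := by
  rw [← (convex_Icc (𝕜 := ℝ) (l i : ℝ) (u i)).convexHull_eq]
  refine mem_convexHull_of_mapsTo_of_isLinearMap
    (L := fun q : ℝ × (κ → ℝ) × (Fin n → ℝ) => q.2.2 i)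
    ⟨fun _ _ => rfl, fun _ _ => rfl⟩ ?_ hq
  rintro ⟨w, y, _⟩ ⟨z, hz, rfl, -⟩
  exact ⟨Int.cast_le.mpr (hz i).1, Int.cast_le.mpr (hz i).2⟩

lemma mem_convexHull_epiSet_max_of_mem_convexHull_jointEpiSet {q : ℝ × (κ → ℝ) × (Fin n → ℝ)}
    (hq : q ∈ convexHull ℝ (jointEpiSet l u h j)) (i : κ) :
    (q.2.2, q.1 + q.2.1 i) ∈ convexHull ℝ (epiSet l u fun z => max (h i z) (h j z)) := by
  refine mem_convexHull_of_mapsTo_of_isLinearMap (L := fun q => (q.2.2, q.1 + q.2.1 i))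
    ⟨fun p q => ?_, fun a q => ?_⟩ ?_ hq
  · simp [add_add_add_comm]
  · simp [mul_add]
  · rintro q ⟨z, hz, hzq, hle⟩
    exact ⟨z, hz, hzq, (max_comm _ _).trans_le (hle i).1⟩

lemma mem_convexHull_epiSet_max_sub_of_mem_convexHull_jointEpiSet
    {q : ℝ × (κ → ℝ) × (Fin n → ℝ)} (hq : q ∈ convexHull ℝ (jointEpiSet l u h j)) (i : κ) :
    (q.2.2, q.2.1 i) ∈ convexHull ℝ (epiSet l u fun z => max 0 (h i z - h j z)) := by
  refine mem_convexHull_of_mapsTo_of_isLinearMap (L := fun q => (q.2.2, q.2.1 i))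
    ⟨fun _ _ => rfl, fun _ _ => rfl⟩ ?_ hq
  rintro q ⟨z, hz, hzq, hle⟩
  exact ⟨z, hz, hzq, (hle i).2⟩

lemma sum_smul_add_mem_convexHull {E κ : Type*} [AddCommGroup E] [Module ℝ E] [Fintype κ]
    {s : Set E} {w : κ → ℝ} (hw : w ∈ stdSimplex ℝ κ) {p : κ → E} {r : E}
    (hp : ∀ k, p k + r ∈ s) : ∑ k, w k • p k + r ∈ convexHull ℝ s := by
  have hmem : ∑ k, w k • (p k + r) ∈ convexHull ℝ s :=
    (convex_convexHull ℝ s).sum_mem (fun k _ => hw.1 k) hw.2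
      fun k _ => subset_convexHull ℝ s (hp k)
  rwa [Finset.sum_congr rfl fun k _ => smul_add (w k) (p k) r, Finset.sum_add_distrib,
    ← Finset.sum_smul, hw.2, one_smul] at hmem

lemma mem_convexHull_jointEpiSet {q : ℝ × (κ → ℝ) × (Fin n → ℝ)} {m : Set.Icc l u → ℝ}
    (hm : m ∈ boxWeights l u q.2.2)
    (hmax : ∀ i, (m ⬝ᵥ fun z => max (h i z) (h j z)) ≤ q.1 + q.2.1 i)
    (hsub : ∀ i, (m ⬝ᵥ fun z => max 0 (h i z - h j z)) ≤ q.2.1 i) :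
    q ∈ convexHull ℝ (jointEpiSet l u h j) := by
  let p (z : Set.Icc l u) : ℝ × (κ → ℝ) × (Fin n → ℝ) :=
    (h j z, fun i => max 0 (h i z - h j z), fun i => z.1 i)
  let r := q - ∑ z, m z • p z
  have hmax_eq (i : κ) (z : Set.Icc l u) :
      max (h i z) (h j z) = h j z + max 0 (h i z - h j z) := by
    rw [← max_add_add_left, add_zero, add_sub_cancel, max_comm]
  have hr_fst : r.1 = q.1 - m ⬝ᵥ fun z => h j z := by
    simp [r, p, Prod.fst_sum, dotProduct]
  have hr_snd (i : κ) : r.2.1 i = q.2.1 i - m ⬝ᵥ fun z => max 0 (h i z - h j z) := by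
    simp [r, p, Prod.fst_sum, Prod.snd_sum, dotProduct]
  have hr_point : r.2.2 = 0 := by
    funext i
    simpa [r, p, Prod.snd_sum, dotProduct, sub_eq_zero] using (hm.2 i).symm
  rw [← add_sub_cancel (∑ z, m z • p z) q]
  refine sum_smul_add_mem_convexHull hm.1 fun z =>
    ⟨z, inBox_iff_mem_Icc.mpr z.2, by
      rw [Prod.snd_add, Prod.snd_add, hr_point, add_zero], fun i => ⟨?_, ?_⟩⟩
  · have hdot : (m ⬝ᵥ fun z => max (h i z) (h j z)) =
        (m ⬝ᵥ fun z => h j z) + m ⬝ᵥ fun z => max 0 (h i z - h j z) := by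
      rw [← dotProduct_add]
      exact congrArg _ (funext (hmax_eq i))
    change _ ≤ h j z + r.1 + (max 0 (h i z - h j z) + r.2.1 i)
    rw [max_comm, hmax_eq, hr_fst, hr_snd]
    linarith [hmax i]
  · change _ ≤ max 0 (h i z - h j z) + r.2.1 i
    rw [hr_snd]
    linarith [hsub i]

end ConvexHull

theorem stmt_14_general {n : ℕ} {κ : Type*} (l u : Fin n → ℤ) (h : κ → (Fin n → ℤ) → ℝ) (j : κ)
    (hconv : ∀ i : κ,
      IsLNatOn l u (fun x => max 0 (h i x - h j x)) ∧
      IsLNatOn l u (fun x => max (h i x) (h j x))) :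
    convexHull ℝ (jointEpiSet l u h j)
      = {q : ℝ × (κ → ℝ) × (Fin n → ℝ) |
          (∀ i, (l i : ℝ) ≤ q.2.2 i ∧ q.2.2 i ≤ (u i : ℝ)) ∧
          ∀ i : κ,
            (q.2.2, q.1 + q.2.1 i) ∈
              convexHull ℝ (epiSet l u (fun z => max (h i z) (h j z))) ∧
            (q.2.2, q.2.1 i) ∈
              convexHull ℝ (epiSet l u (fun z => max 0 (h i z - h j z)))} := by
  ext q
  refine ⟨fun hq => ⟨mem_Icc_of_mem_convexHull_jointEpiSet hq, fun i =>
    ⟨mem_convexHull_epiSet_max_of_mem_convexHull_jointEpiSet hq i,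
      mem_convexHull_epiSet_max_sub_of_mem_convexHull_jointEpiSet hq i⟩⟩, ?_⟩
  rintro ⟨-, hq⟩
  obtain ⟨w, hw, -⟩ := exists_boxWeights_of_mem_convexHull_epiSet (hq j).1
  obtain ⟨m, hm, hmin⟩ := exists_forall_isLNatOn_isMinOn ⟨w, hw⟩
  refine mem_convexHull_jointEpiSet hm (fun i => ?_) (fun i => ?_)
  · obtain ⟨v, hv, hle⟩ := exists_boxWeights_of_mem_convexHull_epiSet (hq i).1
    exact (hmin _ (hconv i).2 hv).trans hle
  · obtain ⟨v, hv, hle⟩ := exists_boxWeights_of_mem_convexHull_epiSet (hq i).2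
    exact (hmin _ (hconv i).1 hv).trans hle

/-- The convex hull of
`D^j = {(w, y, x) : x ∈ 𝒳, w + yᵢ ≥ max(hʲ(x), hⁱ(x)), yᵢ ≥ max(0, hⁱ(x) − hʲ(x)) ∀ i}`
is the intersection of the trivial bounds with the epigraph convex hulls of the
functions `max(hⁱ, hʲ)` and `max(0, hⁱ − hʲ)`, provided these are L♮-convex on `𝒳`. -/
theorem stmt_14 (n : ℕ) (l u : Fin n → ℤ) (hlu : ∀ i, l i ≤ u i)
    (h : Fin n → (Fin n → ℤ) → ℝ) (j : Fin n)
    (hconv : ∀ i : Fin n,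
      IsLNatOn l u (fun x => max 0 (h i x - h j x)) ∧
      IsLNatOn l u (fun x => max (h i x) (h j x))) :
    convexHull ℝ
        {q : ℝ × (Fin n → ℝ) × (Fin n → ℝ) | ∃ z : Fin n → ℤ,
          inBox l u z ∧ q.2.2 = (fun i => (z i : ℝ)) ∧
          ∀ i, max (h j z) (h i z) ≤ q.1 + q.2.1 i ∧
            max 0 (h i z - h j z) ≤ q.2.1 i}
      = {q : ℝ × (Fin n → ℝ) × (Fin n → ℝ) |
          (∀ i, (l i : ℝ) ≤ q.2.2 i ∧ q.2.2 i ≤ (u i : ℝ)) ∧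
          ∀ i : Fin n,
            (q.2.2, q.1 + q.2.1 i) ∈
              convexHull ℝ (epiSet l u (fun z => max (h i z) (h j z))) ∧
            (q.2.2, q.2.1 i) ∈
              convexHull ℝ (epiSet l u (fun z => max 0 (h i z - h j z)))} :=
  stmt_14_general l u h j hconv
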